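/- arXiv:1207.4802 — 4 statements merged into one kernel-verified Lean document; each statement's English description precedes it below -/
import Mathlib

section
/- Let x be an even natural number and let n be a natural number with 1 < n < x. If for every prime q with q < √x one has n mod q ≠ 0 and n ≢ x (mod q), then x − n = 1 or x − n is prime. -/
/-- If `x` is even, `1 < n < x`, and for every prime `q < √x` we have `n mod q ≠ 0`
and `n ≢ x (mod q)` (i.e. `q` does not divide `x - n`), then `x - n = 1` or `x - n`
is prime. -/
theorem sub_of_permitted_index_eq_one_or_prime (x n : ℕ) (hx : 2 ∣ x)
    (h1 : 1 < n) (h2 : n < x)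
    (h : ∀ q : ℕ, q.Prime → (q : ℝ) < Real.sqrt x → n % q ≠ 0 ∧ ¬ q ∣ (x - n)) :
    x - n = 1 ∨ (x - n).Prime := by
  by_contra hc
  push Not at hc
  obtain ⟨hc1, hc2⟩ := hc
  have hpos : 0 < x - n := by omega
  have hsq : (x - n).minFac ^ 2 ≤ x - n := Nat.minFac_sq_le_self hpos hc2
  have hlt : (x - n).minFac ^ 2 < x := by omega
  refine (h _ (Nat.minFac_prime hc1) ?_).2 (Nat.minFac_dvd _)
  apply Real.lt_sqrt_of_sq_lt
  exact_mod_cast hlt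
end

section
/- The ratio c_k / m_k tends to 0 as k → ∞; that is, the real sequence ((p_1 − 1)/p_1) · ∏_{h=2}^{k} (p_h − 2)/p_h converges to 0 as k → ∞. -/
/-- The `h`-th prime number (1-indexed): `nthPrime 1 = 2`, `nthPrime 2 = 3`, ... -/
noncomputable def nthPrime (h : ℕ) : ℕ := Nat.nth Nat.Prime (h - 1)

/-- `mK k = p_1 * p_2 * ⋯ * p_k`, the product of the first `k` primes. -/
noncomputable def mK (k : ℕ) : ℕ := ∏ h ∈ Finset.Icc 1 k, nthPrime h

/-- `cK k = (p_1 - 1) * (p_2 - 2) * ⋯ * (p_k - 2)`. -/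
noncomputable def cK (k : ℕ) : ℕ := (nthPrime 1 - 1) * ∏ h ∈ Finset.Icc 2 k, (nthPrime h - 2)

/-- A selection of level `k`: a family of sets of residues `S h ⊆ {0, …, p_h - 1}`
with `|S 1| = 1` and `|S h| = 2` for `2 ≤ h ≤ k`. -/
def IsSelection (k : ℕ) (S : ℕ → Finset ℕ) : Prop :=
  (∀ h, 1 ≤ h → h ≤ k → S h ⊆ Finset.range (nthPrime h)) ∧
    (S 1).card = 1 ∧ ∀ h, 2 ≤ h → h ≤ k → (S h).card = 2

/-- `n` is permitted for a selection of level `k` if for every `1 ≤ h ≤ k` the residue of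
`n` modulo `p_h` is not a selected remainder. -/
def Permitted (k : ℕ) (S : ℕ → Finset ℕ) (n : ℕ) : Prop :=
  ∀ h ∈ Finset.Icc 1 k, n % nthPrime h ∉ S h

noncomputable instance (k : ℕ) (S : ℕ → Finset ℕ) : DecidablePred (Permitted k S) := fun n =>
  inferInstanceAs (Decidable (∀ h ∈ Finset.Icc 1 k, n % nthPrime h ∉ S h))

/-- The density `δ_k = c_k · p_k / m_k` of permitted `k`-tuples within a period. -/
noncomputable def deltaK (k : ℕ) : ℝ := (cK k : ℝ) * nthPrime k / mK k

lemma not_summable_one_div_nth_prime :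
    ¬ Summable (fun n : ℕ => (1 : ℝ) / (Nat.nth Nat.Prime n : ℕ)) := by
  intro hs
  apply not_summable_one_div_on_primes
  have hinj : Function.Injective (Nat.nth Nat.Prime) :=
    Nat.nth_injective Nat.infinite_setOf_prime
  rw [← hinj.summable_iff]
  · convert hs using 2 with n
    simp [Set.indicator, Nat.prime_nth_prime]
  · intro x hx
    apply Set.indicator_of_notMem
    intro hp
    exact hx (Nat.subset_range_nth hp)

/-- `c_k / m_k → 0`: the sequence `((p_1 - 1)/p_1) · ∏_{h=2}^{k} (p_h - 2)/p_h` converges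
to `0` as `k → ∞`. -/
theorem ck_div_mk_tendsto_zero :
    Filter.Tendsto
      (fun k : ℕ => ((nthPrime 1 : ℝ) - 1) / (nthPrime 1) *
        ∏ h ∈ Finset.Icc 2 k, ((nthPrime h : ℝ) - 2) / (nthPrime h))
      Filter.atTop (nhds 0) := by
  rw [← Filter.tendsto_add_atTop_iff_nat 1]
  rw [← mul_zero (((nthPrime 1 : ℝ) - 1) / (nthPrime 1))]
  apply Filter.Tendsto.const_mul
  have hns : ¬ Summable (fun n : ℕ => (1 : ℝ) / (Nat.nth Nat.Prime (n + 1) : ℕ)) := by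
    intro h
    exact not_summable_one_div_nth_prime
      ((summable_nat_add_iff (f := fun n : ℕ => (1 : ℝ) / (Nat.nth Nat.Prime n : ℕ)) 1).1 h)
  have ht := (not_summable_iff_tendsto_nat_atTop_of_nonneg
    (fun n => by positivity)).1 hns
  have he : Filter.Tendsto (fun k : ℕ => Real.exp (-∑ i ∈ Finset.range k,
      (1 : ℝ) / (Nat.nth Nat.Prime (i + 1) : ℕ))) Filter.atTop (nhds 0) :=
    Real.tendsto_exp_neg_atTop_nhds_zero.comp ht
  have hprod : ∀ k : ℕ, ∏ h ∈ Finset.Icc 2 (k + 1), ((nthPrime h : ℝ) - 2) / (nthPrime h) =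
      ∏ i ∈ Finset.range k, (((Nat.nth Nat.Prime (i + 1) : ℕ) : ℝ) - 2) /
        (Nat.nth Nat.Prime (i + 1) : ℕ) := by
    intro k
    induction k with
    | zero => simp
    | succ k ih =>
      rw [Finset.prod_Icc_succ_top (by omega), ih, Finset.prod_range_succ]
      simp [nthPrime]
  have h2 : ∀ i : ℕ, (2 : ℝ) ≤ (Nat.nth Nat.Prime (i + 1) : ℕ) := fun i => by
    exact_mod_cast (Nat.prime_nth_prime (i + 1)).two_le
  have hnn : ∀ i : ℕ, 0 ≤ (((Nat.nth Nat.Prime (i + 1) : ℕ) : ℝ) - 2) /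
        (Nat.nth Nat.Prime (i + 1) : ℕ) := fun i =>
    div_nonneg (by linarith [h2 i]) (by linarith [h2 i])
  refine squeeze_zero (fun k => ?_) (fun k => ?_) he
  · rw [hprod]
    exact Finset.prod_nonneg fun i _ => hnn i
  · rw [hprod, ← Finset.sum_neg_distrib, Real.exp_sum]
    refine Finset.prod_le_prod (fun i _ => hnn i) (fun i _ => ?_)
    have hp : (0 : ℝ) < (Nat.nth Nat.Prime (i + 1) : ℕ) := by linarith [h2 i]
    have h1 := Real.add_one_le_exp (-((1 : ℝ) / (Nat.nth Nat.Prime (i + 1) : ℕ)))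
    refine le_trans ?_ h1
    rw [sub_div, div_self hp.ne']
    have : (2 : ℝ) / (Nat.nth Nat.Prime (i + 1) : ℕ) = 2 * (1 / (Nat.nth Nat.Prime (i + 1) : ℕ)) := by
      ring
    have h0 : (0 : ℝ) ≤ 1 / (Nat.nth Nat.Prime (i + 1) : ℕ) := by positivity
    linarith
end

section
/- For every k ≥ 1, every selection (S_1, ..., S_k) of level k, and every residue class y modulo p_{k+1}, the number of integers n with 1 ≤ n ≤ m_k · p_{k+1} such that n is permitted for the selection and n ≡ y (mod p_{k+1}) equals c_k = (p_1 − 1)(p_2 − 2)⋯(p_k − 2); in particular this count is the same for all residue classes y modulo p_{k+1}. -/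
lemma nthPrime_prime (h : ℕ) : (nthPrime h).Prime := Nat.prime_nth_prime _

lemma crt_count (I : Finset ℕ) (p : ℕ → ℕ) (hp : ∀ i ∈ I, p i ≠ 0)
    (hc : Set.Pairwise (I : Set ℕ) (Function.onFun Nat.Coprime p)) (T : ℕ → Finset ℕ)
    (hT : ∀ i ∈ I, T i ⊆ Finset.range (p i)) :
    ((Finset.range (∏ i ∈ I, p i)).filter (fun n => ∀ i ∈ I, n % p i ∈ T i)).card
      = ∏ i ∈ I, (T i).card := by
  rw [← Finset.card_pi]
  refine Finset.card_bij (fun n _ => fun i _ => n % p i) ?_ ?_ ?_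
  · intro n hn
    rw [Finset.mem_filter] at hn
    exact Finset.mem_pi.2 hn.2
  · intro a ha b hb hab
    rw [Finset.mem_filter, Finset.mem_range] at ha hb
    have h1 : a ≡ b [MOD ∏ i ∈ I, p i] := by
      rw [Nat.modEq_iff_dvd]
      push_cast
      refine Finset.prod_dvd_of_coprime ?_ ?_
      · intro i hi j hj hij
        exact Nat.isCoprime_iff_coprime.2 (hc hi hj hij)
      · intro i hi
        exact Nat.modEq_iff_dvd.1 (congrFun (congrFun hab i) hi)
    exact Nat.ModEq.eq_of_lt_of_lt h1 ha.1 hb.1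
  · intro f hf
    rw [Finset.mem_pi] at hf
    let a : ℕ → ℕ := fun i => if h : i ∈ I then f i h else 0
    have key : ∀ i (hi : i ∈ I), (Nat.chineseRemainderOfFinset a p I hp hc : ℕ) % p i = f i hi := by
      intro i hi
      have h1 := (Nat.chineseRemainderOfFinset a p I hp hc).2 i hi
      have h2 : a i = f i hi := dif_pos hi
      have h3 := Finset.mem_range.1 (hT i hi (hf i hi))
      rw [h2] at h1
      exact Eq.trans h1 (Nat.mod_eq_of_lt h3)
    refine ⟨Nat.chineseRemainderOfFinset a p I hp hc, ?_, ?_⟩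
    · rw [Finset.mem_filter, Finset.mem_range]
      refine ⟨Nat.chineseRemainderOfFinset_lt_prod a p hp hc, ?_⟩
      intro i hi
      rw [key i hi]
      exact hf i hi
    · funext i hi
      exact key i hi

lemma nthPrime_pairwise (k : ℕ) :
    Set.Pairwise (Finset.Icc 1 k : Set ℕ) (Function.onFun Nat.Coprime nthPrime) := by
  intro i hi j hj hij
  rw [Finset.mem_coe, Finset.mem_Icc] at hi hj
  refine (Nat.coprime_primes (nthPrime_prime i) (nthPrime_prime j)).2 ?_
  intro h
  have := Nat.nth_injective Nat.infinite_setOfPred_prime h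
  omega

/-- The permitted integers in the first `p_{k+1}` periods of `S_k` are uniformly
distributed over the residue classes modulo `p_{k+1}`: for every residue `y`, the number of
permitted `n ∈ [1, m_k · p_{k+1}]` with `n ≡ y (mod p_{k+1})` equals `c_k`. -/
theorem permitted_uniform_distribution (k : ℕ) (hk : 1 ≤ k) (S : ℕ → Finset ℕ)
    (hS : IsSelection k S) (y : ℕ) (hy : y < nthPrime (k + 1)) :
    ((Finset.Icc 1 (mK k * nthPrime (k + 1))).filter
      (fun n => Permitted k S n ∧ n % nthPrime (k + 1) = y)).card = cK k := by
  classical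
  obtain ⟨hsub, h1, h2⟩ := hS
  let T : ℕ → Finset ℕ := fun h =>
    if h = k + 1 then {y} else Finset.range (nthPrime h) \ S h
  have hTk : T (k + 1) = {y} := if_pos rfl
  have hTh : ∀ h, h ≤ k → T h = Finset.range (nthPrime h) \ S h := fun h hh =>
    if_neg (by omega)
  have hM : mK k * nthPrime (k + 1) = ∏ h ∈ Finset.Icc 1 (k + 1), nthPrime h := by
    rw [Finset.prod_Icc_succ_top (by omega)]; rfl
  have hcrt := crt_count (Finset.Icc 1 (k + 1)) nthPrime
    (fun i _ => (nthPrime_prime i).ne_zero) (nthPrime_pairwise (k + 1)) T (by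
      intro i hi
      rw [Finset.mem_Icc] at hi
      rcases Nat.lt_or_ge k i with h | h
      · have : i = k + 1 := by omega
        subst this
        rw [hTk]
        simpa using hy
      · rw [hTh i h]
        exact Finset.sdiff_subset)
  rw [← hM] at hcrt
  have hequiv : ∀ n, (Permitted k S n ∧ n % nthPrime (k + 1) = y) ↔
      ∀ i ∈ Finset.Icc 1 (k + 1), n % nthPrime i ∈ T i := by
    intro n
    constructor
    · rintro ⟨ha, hb⟩ i hi
      rw [Finset.mem_Icc] at hi
      rcases Nat.lt_or_ge k i with h | h
      · have : i = k + 1 := by omega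
        subst this
        rw [hTk]
        simpa using hb
      · rw [hTh i h, Finset.mem_sdiff, Finset.mem_range]
        exact ⟨Nat.mod_lt _ (nthPrime_prime i).pos, ha i (Finset.mem_Icc.2 ⟨hi.1, h⟩)⟩
    · intro ha
      constructor
      · intro i hi
        rw [Finset.mem_Icc] at hi
        have := ha i (Finset.mem_Icc.2 ⟨hi.1, by omega⟩)
        rw [hTh i hi.2, Finset.mem_sdiff] at this
        exact this.2
      · have := ha (k + 1) (Finset.mem_Icc.2 ⟨by omega, le_rfl⟩)
        rw [hTk] at this
        simpa using this
  rw [Finset.filter_congr (fun n _ => hequiv n)]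
  have hper : Function.Periodic (fun n => ∀ i ∈ Finset.Icc 1 (k + 1), n % nthPrime i ∈ T i)
      (mK k * nthPrime (k + 1)) := by
    intro n
    apply propext
    refine forall₂_congr fun i hi => ?_
    have hd : nthPrime i ∣ mK k * nthPrime (k + 1) := by
      rw [hM]; exact Finset.dvd_prod_of_mem _ hi
    rw [Nat.add_mod, Nat.mod_eq_zero_of_dvd hd, Nat.add_zero, Nat.mod_mod]
  have hcount := Nat.filter_Ico_card_eq_of_periodic 1 (mK k * nthPrime (k + 1)) _ hper
  have hIcc : Finset.Icc 1 (mK k * nthPrime (k + 1))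
      = Finset.Ico 1 (1 + mK k * nthPrime (k + 1)) := by
    ext n; simp only [Finset.mem_Icc, Finset.mem_Ico]; omega
  rw [hIcc, hcount, Nat.count_eq_card_filter_range, hcrt, Finset.prod_Icc_succ_top (by omega), hTk,
    Finset.card_singleton, mul_one, ← Finset.insert_Icc_add_one_left_eq_Icc hk,
    Finset.prod_insert (by simp), cK]
  have hcard : ∀ h, 1 ≤ h → h ≤ k → (T h).card = nthPrime h - (S h).card := by
    intro h ha hb
    rw [hTh h hb, Finset.card_sdiff_of_subset (hsub h ha hb), Finset.card_range]
  rw [hcard 1 le_rfl hk, h1]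
  congr 1
  refine Finset.prod_congr rfl fun h hh => ?_
  rw [Finset.mem_Icc] at hh
  rw [hcard h (by omega) hh.2, h2 h hh.1 hh.2]
end

section
/- The density δ_k tends to infinity: the real sequence δ_k = ((p_1 − 1)/p_1) · ∏_{h=2}^{k−1} (p_h − 2)/p_h · (p_k − 2) tends to +∞ as k → ∞. -/
lemma q_prime (k : ℕ) : (Nat.nth Nat.Prime k).Prime := Nat.prime_nth_prime k

lemma q_lt (k : ℕ) : Nat.nth Nat.Prime k < Nat.nth Nat.Prime (k + 1) :=
  (Nat.nth_strictMono Nat.infinite_setOfPred_prime) (Nat.lt_succ_self k)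

lemma q_ge (k : ℕ) : 5 ≤ Nat.nth Nat.Prime (k + 2) := by
  have h := (Nat.nth_strictMono Nat.infinite_setOfPred_prime).monotone (show 2 ≤ k + 2 by omega)
  rwa [Nat.nth_prime_two_eq_five] at h

lemma prime_mods {p : ℕ} (hp : p.Prime) (h5 : 5 ≤ p) : p % 6 = 1 ∨ p % 6 = 5 := by
  have h2 : ¬ 2 ∣ p := fun h => by
    have := (Nat.prime_dvd_prime_iff_eq Nat.prime_two hp).1 h
    omega
  have h3 : ¬ 3 ∣ p := fun h => by
    have := (Nat.prime_dvd_prime_iff_eq Nat.prime_three hp).1 h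
    omega
  omega

lemma q_gaps (k : ℕ) : Nat.nth Nat.Prime (k + 2) + 2 ≤ Nat.nth Nat.Prime (k + 3) ∧
    Nat.nth Nat.Prime (k + 2) + 6 ≤ Nat.nth Nat.Prime (k + 4) := by
  have a := prime_mods (q_prime (k + 2)) (q_ge k)
  have b := prime_mods (q_prime (k + 3)) (q_ge (k + 1))
  have c := prime_mods (q_prime (k + 4)) (q_ge (k + 2))
  have h1 := q_lt (k + 2)
  have h2 := q_lt (k + 3)
  simp only [Nat.add_assoc, Nat.reduceAdd] at *
  omega

lemma mK_pos (k : ℕ) : 0 < mK k := Finset.prod_pos fun h _ => (q_prime (h - 1)).pos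

lemma delta_rec (k : ℕ) : deltaK (k + 2) =
    deltaK (k + 1) * ((Nat.nth Nat.Prime (k + 1) : ℝ) - 2) / Nat.nth Nat.Prime k := by
  have hm : mK (k + 2) = mK (k + 1) * Nat.nth Nat.Prime (k + 1) := by
    unfold mK
    rw [Finset.prod_Icc_succ_top (by omega)]
    rfl
  have hc : cK (k + 2) = cK (k + 1) * (Nat.nth Nat.Prime (k + 1) - 2) := by
    unfold cK
    rw [Finset.prod_Icc_succ_top (by omega), mul_assoc]
    rfl
  have h2 : 2 ≤ Nat.nth Nat.Prime (k + 1) := (q_prime _).two_le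
  have e1 : nthPrime (k + 2) = Nat.nth Nat.Prime (k + 1) := rfl
  have e2 : nthPrime (k + 1) = Nat.nth Nat.Prime k := rfl
  have p0 : (Nat.nth Nat.Prime k : ℝ) ≠ 0 := by exact_mod_cast (q_prime k).ne_zero
  have p1 : (Nat.nth Nat.Prime (k + 1) : ℝ) ≠ 0 := by exact_mod_cast (q_prime (k + 1)).ne_zero
  have p2 : (mK (k + 1) : ℝ) ≠ 0 := by exact_mod_cast (mK_pos (k + 1)).ne'
  unfold deltaK
  rw [hm, hc, e1, e2]
  push_cast [Nat.cast_sub h2]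
  field_simp

lemma delta_pos (k : ℕ) : 0 < deltaK (k + 1) := by
  have hc : 0 < cK (k + 1) := by
    unfold cK
    refine Nat.mul_pos (Nat.sub_pos_of_lt (q_prime 0).one_lt) (Finset.prod_pos fun h hh => ?_)
    have h2 : 2 ≤ h := (Finset.mem_Icc.1 hh).1
    have := (Nat.nth_strictMono Nat.infinite_setOfPred_prime) (show 0 < h - 1 by omega)
    rw [Nat.nth_prime_zero_eq_two] at this
    exact Nat.sub_pos_of_lt this
  have h1 := mK_pos (k + 1)
  have h2 : 0 < nthPrime (k + 1) := (q_prime k).pos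
  unfold deltaK
  positivity

lemma delta_step (k : ℕ) : deltaK (k + 3) ≤ deltaK (k + 4) := by
  rw [delta_rec (k + 2)]
  have h0 := delta_pos (k + 2)
  have g : (Nat.nth Nat.Prime (k + 2) : ℝ) + 2 ≤ Nat.nth Nat.Prime (k + 3) := by
    exact_mod_cast (q_gaps k).1
  have p0 : 0 < (Nat.nth Nat.Prime (k + 2) : ℝ) := by exact_mod_cast (q_prime (k + 2)).pos
  rw [le_div_iff₀ p0]
  exact mul_le_mul_of_nonneg_left (by linarith) h0.le

lemma delta_step2 (k : ℕ) :
    deltaK (k + 3) + deltaK (k + 3) * (1 / (Nat.nth Nat.Prime (k + 2) : ℝ)) ≤ deltaK (k + 5) := by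
  rw [delta_rec (k + 3), delta_rec (k + 2)]
  have h0 := delta_pos (k + 2)
  have g : (Nat.nth Nat.Prime (k + 2) : ℝ) + 2 ≤ Nat.nth Nat.Prime (k + 3) := by
    exact_mod_cast (q_gaps k).1
  have g2 : (Nat.nth Nat.Prime (k + 2) : ℝ) + 6 ≤ Nat.nth Nat.Prime (k + 4) := by
    exact_mod_cast (q_gaps k).2
  have p0 : (5 : ℝ) ≤ (Nat.nth Nat.Prime (k + 2) : ℝ) := by exact_mod_cast q_ge k
  simp only [Nat.add_assoc, Nat.reduceAdd] at *
  generalize (Nat.nth Nat.Prime (k + 2) : ℝ) = a at *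
  generalize (Nat.nth Nat.Prime (k + 3) : ℝ) = b at *
  generalize (Nat.nth Nat.Prime (k + 4) : ℝ) = c at *
  generalize deltaK (k + 3) = d at *
  have key : 1 + 1 / a ≤ (b - 2) * (c - 2) / (a * b) := by
    have e : 1 + 1 / a = (a + 1) * b / (a * b) := by
      have : a ≠ 0 := by linarith
      have : b ≠ 0 := by linarith
      field_simp
    rw [e]
    have : 0 < a * b := by apply mul_pos <;> linarith
    apply div_le_div_of_nonneg_right _ this.le
    nlinarith [mul_nonneg (show 0 ≤ b - 2 by linarith) (show 0 ≤ c - (a + 6) by linarith)]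
  calc d + d * (1 / a) = d * (1 + 1 / a) := by ring
    _ ≤ d * ((b - 2) * (c - 2) / (a * b)) := mul_le_mul_of_nonneg_left key h0.le
    _ = _ := by
      have : a ≠ 0 := by linarith
      have : b ≠ 0 := by linarith
      field_simp

lemma delta_ge (k : ℕ) : deltaK 3 ≤ deltaK (k + 3) := by
  induction k with
  | zero => exact le_rfl
  | succ k ih => exact ih.trans (by simpa [Nat.add_assoc] using delta_step k)

lemma delta_sum (n : ℕ) :
    deltaK 3 * ∑ k ∈ Finset.range n, 1 / (Nat.nth Nat.Prime (k + 2) : ℝ)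
      ≤ deltaK (n + 3) + deltaK (n + 4) := by
  induction n with
  | zero => simpa using add_nonneg (delta_pos 2).le (delta_pos 3).le
  | succ n ih =>
    rw [Finset.sum_range_succ, mul_add]
    have h1 := delta_step2 n
    have h2 : deltaK 3 * (1 / (Nat.nth Nat.Prime (n + 2) : ℝ)) ≤
        deltaK (n + 3) * (1 / (Nat.nth Nat.Prime (n + 2) : ℝ)) :=
      mul_le_mul_of_nonneg_right (delta_ge n) (by positivity)
    have e1 : n + 1 + 3 = n + 4 := by omega
    have e2 : n + 1 + 4 = n + 5 := by omega
    rw [e1, e2]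
    linarith

lemma sum_diverges : Filter.Tendsto
    (fun n => ∑ k ∈ Finset.range n, 1 / (Nat.nth Nat.Prime (k + 2) : ℝ))
    Filter.atTop Filter.atTop := by
  rw [← not_summable_iff_tendsto_nat_atTop_of_nonneg (fun k => by positivity)]
  intro h
  have h' := (summable_nat_add_iff (f := fun k => 1 / (Nat.nth Nat.Prime k : ℝ)) 2).1 h
  apply not_summable_one_div_on_primes
  rw [← (Nat.nth_strictMono Nat.infinite_setOfPred_prime).injective.summable_iff]
  · refine h'.congr fun k => ?_
    simp [q_prime k]
  · intro x hx
    rw [Nat.range_nth_of_infinite Nat.infinite_setOfPred_prime] at hx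
    exact Set.indicator_of_notMem hx _

/-- The density `δ_k = c_k · p_k / m_k` tends to `+∞` as `k → ∞`. -/
theorem deltaK_tendsto_atTop :
    Filter.Tendsto deltaK Filter.atTop Filter.atTop := by
  rw [← Filter.tendsto_add_atTop_iff_nat 4]
  have h := sum_diverges.const_mul_atTop (half_pos (delta_pos 2))
  refine Filter.tendsto_atTop_mono (fun n => ?_) h
  have h1 := delta_sum n
  have h2 := delta_step n
  simp only [Nat.reduceAdd] at *
  linarith
end
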